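/- The function Q(t) = (e^{-αt} - e^{-βt})/(1 - e^{-t}) for t ≠ 0, with Q(0) = β - α, is increasing on (-∞, 0) if and only if (β - α)(1 - α - β) ≥ 0 and (β - α)(2 - |α - β| - α - β) ≥ 0. -/

import Mathlib

open Real Set Filter Topology

lemma aux_mvt (F F' : ℝ → ℝ) (hF : ∀ x, HasDerivAt F (F' x) x) (h0 : F 0 = 0) (s : ℝ) (hs : 0 < s) :
    ∃ x, 0 < x ∧ x < s ∧ F s = F' x * s := by
  obtain ⟨x, hx, h⟩ := exists_hasDerivAt_eq_slope F F' hs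
    (fun x _ => (hF x).continuousAt.continuousWithinAt) (fun x _ => hF x)
  refine ⟨x, hx.1, hx.2, ?_⟩
  rw [h, h0, sub_zero, sub_zero, div_mul_cancel₀ _ hs.ne']

lemma aux_exp (a x : ℝ) : HasDerivAt (fun s : ℝ => exp (a * s)) (a * exp (a * x)) x := by
  have := ((hasDerivAt_id x).const_mul a).exp
  simpa [mul_comm] using this

noncomputable def hh (α β s : ℝ) : ℝ :=
  (β - 1) * exp ((β - α + 1) * s) - β * exp ((β - α) * s) + (1 - α) * exp (1 * s) + α

noncomputable def kk (α β s : ℝ) : ℝ :=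
  (β - 1) * (β - α + 1) * exp ((β - α) * s) - β * (β - α) * exp ((β - α - 1) * s) + (1 - α)

noncomputable def rr (α β s : ℝ) : ℝ :=
  (β - 1) * (β - α + 1) * (exp s - 1) + (α + β - 1)

lemma hh_deriv (α β x : ℝ) : HasDerivAt (hh α β) (exp x * kk α β x) x := by
  have h := ((((aux_exp (β - α + 1) x).const_mul (β - 1)).sub
    ((aux_exp (β - α) x).const_mul β)).add ((aux_exp 1 x).const_mul (1 - α))).add_const α
  refine h.congr_deriv ?_
  have e1 : exp ((β - α + 1) * x) = exp ((β - α - 1) * x) * exp x * exp x := by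
    rw [← exp_add, ← exp_add]; ring_nf
  have e2 : exp ((β - α) * x) = exp ((β - α - 1) * x) * exp x := by
    rw [← exp_add]; ring_nf
  rw [kk, e1, e2, one_mul]
  ring

lemma kk_deriv (α β x : ℝ) :
    HasDerivAt (kk α β) ((β - α) * exp ((β - α - 1) * x) * rr α β x) x := by
  have h := (((aux_exp (β - α) x).const_mul ((β - 1) * (β - α + 1))).sub
    ((aux_exp (β - α - 1) x).const_mul (β * (β - α)))).add_const (1 - α)
  refine h.congr_deriv ?_
  have e2 : exp ((β - α) * x) = exp ((β - α - 1) * x) * exp x := by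
    rw [← exp_add]; ring_nf
  rw [rr, e2]
  ring

lemma hh_eq (α β s : ℝ) (hab : α < β) (hs : 0 < s) :
    ∃ x p, 0 < x ∧ x < s ∧ 0 < p ∧ hh α β s = p * rr α β x := by
  obtain ⟨y, hy0, hys, hy⟩ := aux_mvt _ _ (hh_deriv α β) (by simp [hh]; ring) s hs
  obtain ⟨x, hx0, hxy, hx⟩ := aux_mvt _ _ (kk_deriv α β) (by simp [kk]; ring) y hy0
  have : 0 < β - α := by linarith
  refine ⟨x, exp y * ((β - α) * exp ((β - α - 1) * x)) * y * s, hx0, by linarith,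
    by positivity, ?_⟩
  rw [hy, hx]; ring

lemma hh_iff (α β c : ℝ) (hab : α < β) :
    (∀ s, 0 < s → c * hh α β s ≤ 0) ↔ c * (α + β - 1) ≤ 0 ∧ c * (β - 1) ≤ 0 := by
  have hd : 0 < β - α := by linarith
  constructor
  · intro H
    constructor
    · by_contra! hc
      have hcont : ContinuousAt (fun s => c * rr α β s) 0 := by
        unfold rr; fun_prop
      have hev : ∀ᶠ s in 𝓝 (0:ℝ), 0 < c * rr α β s :=
        hcont.eventually (lt_mem_nhds (by simpa [rr] using hc))
      obtain ⟨δ, hδ, hb⟩ := Metric.eventually_nhds_iff.1 hev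
      obtain ⟨x, p, hx0, hxs, hp, he⟩ := hh_eq α β δ hab hδ
      have h1 := hb (y := x) (by rw [Real.dist_eq, sub_zero, abs_of_pos hx0]; exact hxs)
      have h2 := H δ hδ
      rw [he] at h2
      nlinarith [mul_pos hp h1]
    · have t (a : ℝ) (ha : a < 0) : Tendsto (fun s : ℝ => exp (a * s)) atTop (𝓝 0) :=
        tendsto_exp_atBot.comp (tendsto_id.const_mul_atTop_of_neg ha)
      have hl : Tendsto (fun s : ℝ => c * ((β - 1) - β * exp (-1 * s)
          + (1 - α) * exp (-(β - α) * s) + α * exp (-(β - α + 1) * s))) atTop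
          (𝓝 (c * ((β - 1) - β * 0 + (1 - α) * 0 + α * 0))) :=
        (((tendsto_const_nhds.sub ((t (-1) (by norm_num)).const_mul β)).add
          ((t (-(β - α)) (by linarith)).const_mul (1 - α))).add
          ((t (-(β - α + 1)) (by linarith)).const_mul α)).const_mul c
      have : c * ((β - 1) - β * 0 + (1 - α) * 0 + α * 0) ≤ 0 := by
        refine le_of_tendsto hl ?_
        filter_upwards [eventually_gt_atTop 0] with s hs
        have h1 := mul_nonpos_of_nonneg_of_nonpos (exp_pos (-(β - α + 1) * s)).le (H s hs)
        refine le_of_eq_of_le ?_ h1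
        have e1 : exp (-(β - α + 1) * s) * exp ((β - α + 1) * s) = 1 := by
          rw [← exp_add, ← exp_zero]; ring_nf
        have e2 : exp (-1 * s) = exp (-(β - α + 1) * s) * exp ((β - α) * s) := by
          rw [← exp_add]; ring_nf
        have e3 : exp (-(β - α) * s) = exp (-(β - α + 1) * s) * exp (1 * s) := by
          rw [← exp_add]; ring_nf
        rw [hh, e2, e3]
        linear_combination (-c * (β - 1)) * e1
      simpa using this
  · rintro ⟨h1, h2⟩ s hs
    obtain ⟨x, p, hx0, hxs, hp, he⟩ := hh_eq α β s hab hs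
    have h3 : 0 < exp x - 1 := by linarith [add_one_le_exp x]
    have h4 : 0 ≤ (β - α + 1) * (exp x - 1) := by positivity
    have h5 : c * rr α β x ≤ 0 := by
      rw [rr]; nlinarith [mul_nonneg h4 (neg_nonneg.2 h2)]
    rw [he]; nlinarith [mul_nonneg hp.le (neg_nonneg.2 h5)]

noncomputable def ff (α β c s : ℝ) : ℝ := c * ((exp (β * s) - exp (α * s)) / (exp (1 * s) - 1))

lemma ff_deriv (α β c s : ℝ) (hs : 0 < s) :
    HasDerivAt (ff α β c) (exp (α * s) / (exp (1 * s) - 1) ^ 2 * (c * hh α β s)) s := by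
  have h3 : exp (1 * s) - 1 ≠ 0 := by
    rw [one_mul]; have := add_one_le_exp s; intro h; linarith
  have h := (((aux_exp β s).sub (aux_exp α s)).div ((aux_exp 1 s).sub_const 1) h3).const_mul c
  refine h.congr_deriv ?_
  have e1 : exp (β * s) = exp (α * s) * exp ((β - α) * s) := by
    rw [← exp_add]; ring_nf
  have e2 : exp ((β - α + 1) * s) = exp (1 * s) * exp ((β - α) * s) := by
    rw [← exp_add]; ring_nf
  simp only [Pi.sub_apply]
  rw [hh, e2, e1]
  field_simp
  ring

lemma ff_iff (α β c : ℝ) (hab : α < β) :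
    AntitoneOn (ff α β c) (Ioi 0) ↔ c * (α + β - 1) ≤ 0 ∧ c * (β - 1) ≤ 0 := by
  rw [← hh_iff α β c hab]
  have hp : ∀ s : ℝ, 0 < s → 0 < exp (α * s) / (exp (1 * s) - 1) ^ 2 := by
    intro s hs
    have : 0 < exp (1 * s) - 1 := by rw [one_mul]; linarith [add_one_le_exp s]
    positivity
  constructor
  · intro H s hs
    have h1 := H.derivWithin_nonpos (x := s)
    rw [derivWithin_of_isOpen isOpen_Ioi hs, (ff_deriv α β c s hs).deriv] at h1
    exact nonpos_of_mul_nonpos_right h1 (hp s hs)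
  · intro H
    refine antitoneOn_of_deriv_nonpos (convex_Ioi 0)
      (fun s hs => (ff_deriv α β c s hs).continuousAt.continuousWithinAt)
      (fun s hs => ?_) (fun s hs => ?_)
    · rw [interior_Ioi] at hs
      exact (ff_deriv α β c s hs).differentiableAt.differentiableWithinAt
    · rw [interior_Ioi] at hs
      rw [(ff_deriv α β c s hs).deriv]
      exact mul_nonpos_of_nonneg_of_nonpos (hp s hs).le (H s hs)

lemma aux_neg (f g : ℝ → ℝ) (h : ∀ s, 0 < s → f (-s) = g s) :
    MonotoneOn f (Iio 0) ↔ AntitoneOn g (Ioi 0) := by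
  constructor
  · intro H a ha b hb hab
    rw [← h a ha, ← h b hb]
    simp only [mem_Ioi] at ha hb
    exact H (by simpa using hb) (by simpa using ha) (by linarith)
  · intro H a ha b hb hab
    simp only [mem_Iio] at ha hb
    have := H (a := -b) (b := -a) (by simpa using hb) (by simpa using ha) (by linarith)
    rw [← h _ (by linarith), ← h _ (by linarith), neg_neg, neg_neg] at this
    exact this

theorem stmt2 (α β : ℝ) (hab : α ≠ β) (h01 : (α, β) ≠ (0, 1)) (h10 : (α, β) ≠ (1, 0)) :
    MonotoneOn (fun t : ℝ => if t = 0 then β - α else (Real.exp (-α*t) - Real.exp (-β*t)) / (1 - Real.exp (-t))) (Set.Iio 0) ↔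
      (β - α) * (1 - α - β) ≥ 0 ∧ (β - α) * (2 - |α - β| - α - β) ≥ 0 := by
  have key : ∀ s : ℝ, 0 < s → exp (1 * s) - 1 ≠ 0 ∧ 1 - exp s ≠ 0 := by
    intro s hs
    have := add_one_le_exp s
    rw [one_mul]
    constructor <;> (intro h; linarith)
  rcases lt_or_gt_of_ne hab with h | h
  · rw [aux_neg _ (ff α β 1), ff_iff α β 1 h, abs_of_neg (by linarith)]
    · have hd : 0 < β - α := by linarith
      rw [ge_iff_le, ge_iff_le, mul_nonneg_iff_of_pos_left hd, mul_nonneg_iff_of_pos_left hd]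
      constructor <;> rintro ⟨h1, h2⟩ <;> constructor <;> linarith
    · intro s hs
      obtain ⟨k1, k2⟩ := key s hs
      simp only [neg_eq_zero, hs.ne', if_false, neg_mul_neg, neg_neg, ff]
      rw [one_mul] at *
      rw [one_mul, div_eq_div_iff k2 k1]; ring
  · rw [aux_neg _ (ff β α (-1)), ff_iff β α (-1) h, abs_of_pos (by linarith)]
    · have hd : 0 < α - β := by linarith
      have e (x : ℝ) : (β - α) * x = (α - β) * (-x) := by ring
      rw [ge_iff_le, ge_iff_le, e, e, mul_nonneg_iff_of_pos_left hd, mul_nonneg_iff_of_pos_left hd]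
      constructor <;> rintro ⟨h1, h2⟩ <;> constructor <;> linarith
    · intro s hs
      obtain ⟨k1, k2⟩ := key s hs
      simp only [neg_eq_zero, hs.ne', if_false, neg_mul_neg, neg_neg, ff]
      rw [one_mul] at *
      rw [neg_one_mul, ← neg_div, div_eq_div_iff k2 k1]; ring
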